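/- arXiv:2503.19181 — 2 statements merged into one kernel-verified Lean document; each statement's English description precedes it below -/
import Mathlib

section
/- Let E ⊆ (Fin m → ZMod 2) and F ⊆ (Fin k → ZMod 2) be point sets of binary matroids and let τ : E → F be any function. The following are equivalent: (i) ∑_{e ∈ Z} τ(e) = 0 for every circuit Z of E; (ii) ∑_{e ∈ Z} τ(e) = 0 for every cycle Z of E; (iii) there exists a ZMod 2-linear map T : (Fin m → ZMod 2) → (Fin k → ZMod 2) with T e = τ e for every e ∈ E. -/
/-- A circuit of a binary matroid with point set `E`: a minimal nonempty subset summing to 0. -/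
def IsCircuit {P : Type*} [AddCommGroup P] (E Z : Finset P) : Prop :=
  Z ⊆ E ∧ Z.Nonempty ∧ ∑ e ∈ Z, e = 0 ∧
    ∀ Z' ⊆ Z, Z'.Nonempty → ∑ e ∈ Z', e = 0 → Z' = Z

/-- A cocircuit: a minimal nonempty subset meeting every circuit evenly. -/
def IsCocircuit {P : Type*} [AddCommGroup P] [DecidableEq P] (E C : Finset P) : Prop :=
  C ⊆ E ∧ C.Nonempty ∧ (∀ Z, IsCircuit E Z → Even (C ∩ Z).card) ∧
    ∀ C' ⊆ C, C'.Nonempty → (∀ Z, IsCircuit E Z → Even (C' ∩ Z).card) → C' = C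

/-- A matroid homomorphism from the matroid on `E` to the matroid on `F`. -/
def IsMHom {P Q : Type*} [AddCommGroup P] [AddCommGroup Q]
    (E : Finset P) (F : Finset Q) (τ : P → Q) : Prop :=
  (∀ e ∈ E, τ e ∈ F) ∧ ∀ Z, IsCircuit E Z → ∑ e ∈ Z, τ e = 0

/-- Adjacency in the recolouring graph: the maps differ exactly on a cocircuit. -/
def MAdj {P Q : Type*} [AddCommGroup P] [AddCommGroup Q] [DecidableEq P]
    (E : Finset P) (τ τ' : P → Q) : Prop :=
  ∃ C, IsCocircuit E C ∧ ∀ e ∈ E, (τ e ≠ τ' e ↔ e ∈ C)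

/-- One step of a walk in `mCol(E,F)`: both maps are homomorphisms and they are
equal (as maps on `E`) or adjacent. -/
def MStep {P Q : Type*} [AddCommGroup P] [AddCommGroup Q] [DecidableEq P]
    (E : Finset P) (F : Finset Q) (τ τ' : P → Q) : Prop :=
  IsMHom E F τ ∧ IsMHom E F τ' ∧ ((∀ e ∈ E, τ e = τ' e) ∨ MAdj E τ τ')

/-- Joined by a walk in the recolouring graph `mCol(E,F)`. -/
def MWalk {P Q : Type*} [AddCommGroup P] [AddCommGroup Q] [DecidableEq P]
    (E : Finset P) (F : Finset Q) : (P → Q) → (P → Q) → Prop :=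
  Relation.ReflTransGen (MStep E F)

/-- The indicator vector of a vertex. -/
def ind {V : Type*} [DecidableEq V] (u : V) : V → ZMod 2 := Pi.single u 1

/-- The decision graph of a set `F` of nonzero vectors. -/
def decisionGraph {m : ℕ} (F : Finset (Fin m → ZMod 2)) : SimpleGraph (Fin m → ZMod 2) where
  Adj v w := v + w ∈ F ∧ v ≠ w
  symm := by
    refine ⟨?_⟩
    intro v w h
    exact ⟨by rw [add_comm]; exact h.1, h.2.symm⟩
  loopless := by
    refine ⟨?_⟩
    intro v h
    exact h.2 rfl

/-- The weight of a vector: its number of nonzero coordinates. -/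
def wt {n : ℕ} (e : Fin n → ZMod 2) : ℕ := (Finset.univ.filter fun i => e i ≠ 0).card

/-!
A minimal nonempty zero-sum subset of a cycle is a circuit, and removing it leaves a smaller cycle,
so vanishing on circuits propagates to all cycles. Over `ZMod 2` a linear relation among points is
the zero sum over its support, so vanishing on cycles says that `τ` respects every linear relation
among the points of `E`; this is exactly what is needed to extend `τ` linearly, first to the span
of `E` and then to the whole space.
-/

section Circuits

variable {P : Type*} [AddCommGroup P] {E Z : Finset P}

theorem exists_isCircuit_subset (hZE : Z ⊆ E) (hZ : Z.Nonempty) (hZ₀ : ∑ e ∈ Z, e = 0) :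
    ∃ C ⊆ Z, IsCircuit E C := by
  obtain ⟨C, hCZ, ⟨hC, hC₀⟩, hmin⟩ := exists_minimal_le_of_wellFoundedLT
    (fun C : Finset P ↦ C.Nonempty ∧ ∑ e ∈ C, e = 0) Z ⟨hZ, hZ₀⟩
  exact ⟨C, hCZ, hCZ.trans hZE, hC, hC₀, fun _ hC' hne h₀ ↦ hC'.antisymm (hmin ⟨hne, h₀⟩ hC')⟩

theorem sum_eq_zero_of_forall_isCircuit {Q : Type*} [AddCommMonoid Q] {τ : P → Q}
    (hτ : ∀ C, IsCircuit E C → ∑ e ∈ C, τ e = 0) (hZE : Z ⊆ E) (hZ₀ : ∑ e ∈ Z, e = 0) :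
    ∑ e ∈ Z, τ e = 0 := by
  classical
  induction Z using Finset.strongInduction with
  | H Z ih =>
    obtain rfl | hZ := Z.eq_empty_or_nonempty
    · exact Finset.sum_empty
    obtain ⟨C, hCZ, hC⟩ := exists_isCircuit_subset hZE hZ hZ₀
    have ⟨_, hCne, hC₀, _⟩ := hC
    have hdiff₀ : ∑ e ∈ Z \ C, e = 0 := by
      rwa [← Finset.sum_sdiff hCZ, hC₀, add_zero] at hZ₀
    have hdiff : ∑ e ∈ Z \ C, τ e = 0 :=
      ih _ (Finset.sdiff_ssubset hCZ hCne) (Finset.sdiff_subset.trans hZE) hdiff₀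
    rw [← Finset.sum_sdiff hCZ, hdiff, hτ C hC, add_zero]

end Circuits

section LinearExtension

variable {K U V W : Type*} [DivisionRing K] [AddCommGroup U] [Module K U]
  [AddCommGroup V] [Module K V] [AddCommGroup W] [Module K W]

theorem exists_comp_eq_of_ker_le_ker {A : U →ₗ[K] V} {B : U →ₗ[K] W}
    (h : LinearMap.ker A ≤ LinearMap.ker B) : ∃ T : V →ₗ[K] W, T ∘ₗ A = B := by
  have hinj : Function.Injective ((LinearMap.ker A).liftQ A le_rfl) :=
    LinearMap.ker_eq_bot.mp (Submodule.ker_liftQ_eq_bot' _ A rfl)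
  obtain ⟨T, hT⟩ := IsSemisimpleModule.extension_property _ hinj ((LinearMap.ker A).liftQ B h)
  refine ⟨T, ?_⟩
  rw [← (LinearMap.ker A).liftQ_mkQ A le_rfl, ← LinearMap.comp_assoc, hT, Submodule.liftQ_mkQ]

theorem exists_linearMap_apply_eq_of_linearCombination_eq_zero {ι : Type*} {v : ι → V} {w : ι → W}
    (h : ∀ c, Finsupp.linearCombination K v c = 0 → Finsupp.linearCombination K w c = 0) :
    ∃ T : V →ₗ[K] W, ∀ i, T (v i) = w i := by
  obtain ⟨T, hT⟩ := exists_comp_eq_of_ker_le_ker h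
  refine ⟨T, fun i ↦ ?_⟩
  simpa using LinearMap.congr_fun hT (Finsupp.single i 1)

end LinearExtension

section Binary

variable {V W : Type*} [AddCommGroup V] [Module (ZMod 2) V] [AddCommGroup W] [Module (ZMod 2) W]

theorem linearCombination_zmod_two {ι : Type*} (v : ι → V) (c : ι →₀ ZMod 2) :
    Finsupp.linearCombination (ZMod 2) v c = ∑ i ∈ c.support, v i := by
  rw [Finsupp.linearCombination_apply]
  refine Finset.sum_congr rfl fun i hi ↦ ?_
  have hci : c i = 1 := Fin.eq_one_of_ne_zero _ (Finsupp.mem_support_iff.mp hi)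
  simp only [hci, one_smul]

theorem exists_linearMap_eqOn_of_forall_sum_eq_zero {E : Finset V} {τ : V → W}
    (hτ : ∀ Z ⊆ E, ∑ e ∈ Z, e = 0 → ∑ e ∈ Z, τ e = 0) :
    ∃ T : V →ₗ[ZMod 2] W, ∀ e ∈ E, T e = τ e := by
  suffices h : ∀ c, Finsupp.linearCombination (ZMod 2) (fun e : E ↦ (e : V)) c = 0 →
      Finsupp.linearCombination (ZMod 2) (fun e : E ↦ τ e) c = 0 by
    obtain ⟨T, hT⟩ := exists_linearMap_apply_eq_of_linearCombination_eq_zero h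
    exact ⟨T, fun e he ↦ hT ⟨e, he⟩⟩
  intro c hc
  rw [linearCombination_zmod_two] at hc ⊢
  simpa using hτ (c.support.map (Function.Embedding.subtype _)) (Finset.map_subtype_subset _)
    (by simpa using hc)

theorem stmt0_general (E : Finset V) (τ : V → W) :
    List.TFAE
      [ (∀ Z, IsCircuit E Z → ∑ e ∈ Z, τ e = 0),
        (∀ Z ⊆ E, ∑ e ∈ Z, e = 0 → ∑ e ∈ Z, τ e = 0),
        (∃ T : V →ₗ[ZMod 2] W, ∀ e ∈ E, T e = τ e) ] := by
  tfae_have 1 → 2 := fun hτ _ ↦ sum_eq_zero_of_forall_isCircuit hτ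
  tfae_have 2 → 3 := exists_linearMap_eqOn_of_forall_sum_eq_zero
  tfae_have 3 → 1 := by
    rintro ⟨T, hT⟩ Z ⟨hZE, -, hZ₀, -⟩
    calc ∑ e ∈ Z, τ e = ∑ e ∈ Z, T e := Finset.sum_congr rfl fun e he ↦ (hT e (hZE he)).symm
      _ = T (∑ e ∈ Z, e) := (map_sum T _ Z).symm
      _ = 0 := by rw [hZ₀, map_zero]
  tfae_finish

end Binary

theorem stmt0 (m k : ℕ) (E : Finset (Fin m → ZMod 2)) (F : Finset (Fin k → ZMod 2))
    (τ : (Fin m → ZMod 2) → (Fin k → ZMod 2)) (hτ : ∀ e ∈ E, τ e ∈ F) :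
    List.TFAE
      [ (∀ Z, IsCircuit E Z → ∑ e ∈ Z, τ e = 0),
        (∀ Z ⊆ E, ∑ e ∈ Z, e = 0 → ∑ e ∈ Z, τ e = 0),
        (∃ T : (Fin m → ZMod 2) →ₗ[ZMod 2] (Fin k → ZMod 2), ∀ e ∈ E, T e = τ e) ] :=
  stmt0_general E τ
end

section
/- Let G be a finite simple graph, let F be a finite set of distinct nonzero vectors in (Fin m → ZMod 2), and let D(F) be the decision graph of F. For every graph homomorphism φ : G → D(F), the map τ_φ from E_G to F sending 𝟙_u + 𝟙_v (for each edge uv of G) to φ(u) + φ(v) is well defined and is a matroid homomorphism from the graphic matroid M(G) to the binary matroid with point set F. -/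
/-!
The indicator vectors of the vertices form a basis of `V → ZMod 2`, so `φ` extends to a linear map
on the whole space, and `τ_φ` is its restriction to the edge vectors. Linearity makes `τ_φ` well
defined and sends every zero-sum set, in particular every circuit, to a zero sum.
-/

theorem isMHom_of_mapsTo {P Q A : Type*} [AddCommGroup P] [AddCommGroup Q] [FunLike A P Q]
    [AddMonoidHomClass A P Q] {E : Finset P} {F : Finset Q} (f : A) (hf : Set.MapsTo f E F) :
    IsMHom E F f := by
  refine ⟨hf, fun Z ⟨_, _, sum_eq_zero, _⟩ => ?_⟩
  rw [← map_sum, sum_eq_zero, map_zero]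

section LinearExtension

variable {V M : Type*} [Fintype V] [DecidableEq V] [AddCommMonoid M] [Module (ZMod 2) M]

theorem linearCombination_ind (φ : V → M) (u : V) :
    Fintype.linearCombination (ZMod 2) φ (ind u) = φ u := by
  rw [ind, Fintype.linearCombination_apply_single, one_smul]

theorem linearCombination_ind_add_ind (φ : V → M) (u v : V) :
    Fintype.linearCombination (ZMod 2) φ (ind u + ind v) = φ u + φ v := by
  rw [map_add, linearCombination_ind, linearCombination_ind]

end LinearExtension

theorem stmt11 {V : Type*} [Fintype V] [DecidableEq V] (m : ℕ)
    (G : SimpleGraph V) (F : Finset (Fin m → ZMod 2)) (hF : ∀ f ∈ F, f ≠ 0)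
    (EG : Finset (V → ZMod 2))
    (hEG : ∀ x, x ∈ EG ↔ ∃ u v, G.Adj u v ∧ x = ind u + ind v)
    (φ : G →g decisionGraph F) :
    ∃ τ : (V → ZMod 2) → (Fin m → ZMod 2),
      (∀ u v, G.Adj u v → τ (ind u + ind v) = φ u + φ v) ∧
      IsMHom EG F τ := by
  refine ⟨Fintype.linearCombination (ZMod 2) φ,
    fun u v _ => linearCombination_ind_add_ind φ u v, isMHom_of_mapsTo _ fun e he => ?_⟩
  obtain ⟨u, v, huv, rfl⟩ := (hEG e).1 he
  rw [linearCombination_ind_add_ind]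
  exact (φ.map_adj huv).1
end
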